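/- arXiv:1906.09256 — 6 statements merged into one kernel-verified Lean document; each statement's English description precedes it below -/
import Mathlib

section
/- Let Z be a measurable space and N a positive integer. If f : ℝ^N → [0,1] is a p-variable for testing exchangeability in ℝ^N (i.e., f is measurable and P(f ≤ ε) ≤ ε for every exchangeable probability measure P on ℝ^N and every ε > 0), and A is an equivariant measurable map sending each sequence (z_1,…,z_N) ∈ Z^N to a sequence (α_1,…,α_N) ∈ ℝ^N (equivariance: for every permutation π of {1,…,N}, if A(z_1,…,z_N) = (α_1,…,α_N) then A(z_{π(1)},…,z_{π(N)}) = (α_{π(1)},…,α_{π(N)})), then the composition f ∘ A is a p-variable for testing exchangeability in Z^N, i.e., P(f ∘ A ≤ ε) ≤ ε for every exchangeable probability measure P on Z^N and every ε > 0. -/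
open MeasureTheory

/-- A probability measure on `Fin N → X` is exchangeable if it is invariant under
all coordinate permutations. -/
def Exchangeable {X : Type*} [MeasurableSpace X] {N : ℕ}
    (P : Measure (Fin N → X)) : Prop :=
  ∀ π : Equiv.Perm (Fin N), Measure.map (fun x => x ∘ π) P = P

/-- If `f` is a p-variable for testing exchangeability in `ℝ^N` and `A` is an
equivariant nonconformity measure, then `f ∘ A` is a p-variable for testing
exchangeability in `Z^N`. -/
theorem composition_is_p_variable_for_exchangeability
    {Z : Type*} [MeasurableSpace Z] (N : ℕ) (hN : 0 < N)
    (f : (Fin N → ℝ) → ℝ) (hf_meas : Measurable f)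
    (hf01 : ∀ x, f x ∈ Set.Icc (0 : ℝ) 1)
    (hf : ∀ P : Measure (Fin N → ℝ), IsProbabilityMeasure P → Exchangeable P →
      ∀ ε : ℝ, 0 < ε → P {x | f x ≤ ε} ≤ ENNReal.ofReal ε)
    (A : (Fin N → Z) → (Fin N → ℝ)) (hA_meas : Measurable A)
    (hA_equiv : ∀ (π : Equiv.Perm (Fin N)) (z : Fin N → Z), A (z ∘ π) = A z ∘ π)
    (P : Measure (Fin N → Z)) (hP : IsProbabilityMeasure P) (hPex : Exchangeable P)
    (ε : ℝ) (hε : 0 < ε) :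
    P {z | f (A z) ≤ ε} ≤ ENNReal.ofReal ε := by
  -- By equivariance, permuting the coordinates after `A` is the same as permuting them before it,
  -- so exchangeability passes from `P` to its image under `A`.
  have hex : Exchangeable (P.map A) := by
    intro π
    have hcomm : (fun x : Fin N → ℝ => x ∘ π) ∘ A = A ∘ fun z => z ∘ π :=
      funext fun z => (hA_equiv π z).symm
    have hZ : Measurable fun z : Fin N → Z => z ∘ π :=
      measurable_pi_lambda _ fun i => measurable_pi_apply (π i)
    have hR : Measurable fun x : Fin N → ℝ => x ∘ π :=
      measurable_pi_lambda _ fun i => measurable_pi_apply (π i)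
    rw [Measure.map_map hR hA_meas, hcomm, ← Measure.map_map hA_meas hZ, hPex π]
  have h := hf (P.map A) (Measure.isProbabilityMeasure_map hA_meas.aemeasurable) hex ε hε
  rwa [Measure.map_apply hA_meas (measurableSet_le hf_meas measurable_const)] at h
end

section
/- Let N be an even positive integer and let E ⊆ {0,1}^N be the set of binary sequences of length N containing exactly N/2 ones. Define f : {0,1}^N → [0,1] by f(ω) = N^{−1/2} if ω ∈ E and f(ω) = 1 otherwise. Then f is a p-variable for testing randomness in {0,1}^N: for every p ∈ [0,1] and every ε > 0, B_p^N({ω : f(ω) ≤ ε}) ≤ ε. -/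
/-!
Write `N = 2k` and let `E` be the set of sequences with exactly `k` ones. If `ε ≥ 1` the bound is
trivial, and if `ε < 1` then `{f ≤ ε}` is contained in `E` and is nonempty only when `1 / √N ≤ ε`.
So everything reduces to `B_p^N(E) ≤ 1 / √N`. Each sequence in `E` has mass `(p (1 - p)) ^ k`, at
most `4⁻ᵏ`, and `E` has `centralBinom k` elements. The estimate
`centralBinom k ^ 2 * (2k + 1) ≤ 16 ^ k` (`centralBinom_sq_mul_le`) then finishes the proof.
-/

open MeasureTheory ENNReal NNReal

/-- The Bernoulli measure on `Bool` with probability `p` of `true`. -/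
noncomputable def bern (p : ℝ) : Measure Bool :=
  ENNReal.ofReal p • Measure.dirac true + ENNReal.ofReal (1 - p) • Measure.dirac false

/-- The `N`-fold product of the Bernoulli measure with parameter `p`. -/
noncomputable def bernPi (N : ℕ) (p : ℝ) : Measure (Fin N → Bool) :=
  Measure.pi fun _ => bern p

/-- The factor `2k + 1`, rather than the `2k` needed in the application, makes the induction
close: the left side is multiplied by `16 (2k + 1) (2k + 3) / (2k + 2) ^ 2 < 16` at each step. -/
lemma centralBinom_sq_mul_le (k : ℕ) : k.centralBinom ^ 2 * (2 * k + 1) ≤ 16 ^ k := by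
  induction k with
  | zero => simp
  | succ k ih =>
    have h := Nat.succ_mul_centralBinom_succ k
    have hpos : 0 < (k + 1) ^ 2 := by positivity
    refine Nat.le_of_mul_le_mul_left ?_ hpos
    calc (k + 1) ^ 2 * ((k + 1).centralBinom ^ 2 * (2 * (k + 1) + 1))
        = ((k + 1) * (k + 1).centralBinom) ^ 2 * (2 * k + 3) := by ring
      _ = (k.centralBinom ^ 2 * (2 * k + 1)) * (4 * ((2 * k + 1) * (2 * k + 3))) := by
          rw [h]; ring
      _ ≤ 16 ^ k * (4 * (4 * (k + 1) ^ 2)) := by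
          refine Nat.mul_le_mul ih (Nat.mul_le_mul_left 4 ?_)
          nlinarith
      _ = (k + 1) ^ 2 * 16 ^ (k + 1) := by ring

lemma centralBinom_mul_pow_le (k : ℕ) (hk : 0 < k) {p : ℝ} (hp : p ∈ Set.Icc (0 : ℝ) 1) :
    (k.centralBinom : ℝ) * (p ^ k * (1 - p) ^ k) ≤ 1 / √((2 * k : ℕ) : ℝ) := by
  have h1 : p ^ k * (1 - p) ^ k ≤ (1 / 4) ^ k := by
    rw [← mul_pow]
    have h0 : 0 ≤ p * (1 - p) := mul_nonneg hp.1 (by linarith [hp.2])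
    gcongr
    nlinarith [sq_nonneg (p - 1 / 2)]
  have h2 : (k.centralBinom : ℝ) ^ 2 * (2 * k + 1) ≤ 16 ^ k := by
    exact_mod_cast centralBinom_sq_mul_le k
  have hN : (0 : ℝ) < ((2 * k : ℕ) : ℝ) := by positivity
  have h3 : (k.centralBinom : ℝ) * √((2 * k : ℕ) : ℝ) ≤ 4 ^ k := by
    refine le_of_sq_le_sq ?_ (by positivity)
    rw [mul_pow, Real.sq_sqrt hN.le, ← pow_mul, mul_comm k 2, pow_mul]
    push_cast
    norm_num
    nlinarith [sq_nonneg (k.centralBinom : ℝ)]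
  rw [le_div_iff₀ (Real.sqrt_pos.2 hN)]
  calc (k.centralBinom : ℝ) * (p ^ k * (1 - p) ^ k) * √((2 * k : ℕ) : ℝ)
      = ((k.centralBinom : ℝ) * √((2 * k : ℕ) : ℝ)) * (p ^ k * (1 - p) ^ k) := by ring
    _ ≤ 4 ^ k * (1 / 4) ^ k :=
        mul_le_mul h3 h1 (mul_nonneg (pow_nonneg hp.1 k)
          (pow_nonneg (sub_nonneg.2 hp.2) k)) (by positivity)
    _ = 1 := by rw [← mul_pow]; norm_num

lemma isProbabilityMeasure_bern {p : ℝ} (hp : p ∈ Set.Icc (0 : ℝ) 1) :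
    IsProbabilityMeasure (bern p) := by
  constructor
  simp only [bern, Measure.add_apply, Measure.smul_apply, measure_univ, smul_eq_mul, mul_one]
  rw [← ENNReal.ofReal_add hp.1 (by linarith [hp.2])]
  simp

lemma bern_singleton (p : ℝ) (b : Bool) :
    bern p {b} = if b = true then ENNReal.ofReal p else ENNReal.ofReal (1 - p) := by
  cases b <;> simp [bern]

lemma bernPi_singleton {N : ℕ} {p : ℝ} (hp : p ∈ Set.Icc (0 : ℝ) 1) (ω : Fin N → Bool) :
    bernPi N p {ω} = ENNReal.ofReal
      (p ^ (Finset.univ.filter (fun i => ω i = true)).card *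
        (1 - p) ^ (N - (Finset.univ.filter (fun i => ω i = true)).card)) := by
  have := isProbabilityMeasure_bern hp
  have hq : 0 ≤ 1 - p := by linarith [hp.2]
  have hc : (Finset.univ.filter (fun i => ¬ ω i = true)).card =
      N - (Finset.univ.filter (fun i => ω i = true)).card := by
    have := Finset.card_filter_add_card_filter_not
      (s := (Finset.univ : Finset (Fin N))) (fun i => ω i = true)
    rw [Finset.card_univ, Fintype.card_fin] at this
    omega
  rw [bernPi, Measure.pi_singleton]
  simp only [bern_singleton]
  rw [Finset.prod_ite, Finset.prod_const, Finset.prod_const, hc,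
    ENNReal.ofReal_mul (pow_nonneg hp.1 _), ENNReal.ofReal_pow hp.1, ENNReal.ofReal_pow hq]

lemma card_filter_card_ones_eq (N k : ℕ) :
    (Finset.univ.filter (fun ω : Fin N → Bool =>
      (Finset.univ.filter (fun i => ω i = true)).card = k)).card = N.choose k := by
  have h : (Finset.powersetCard k (Finset.univ : Finset (Fin N))).card = N.choose k := by
    simp
  rw [← h]
  refine Finset.card_nbij' (fun ω => Finset.univ.filter (fun i => ω i = true))
    (fun s i => decide (i ∈ s)) ?_ ?_ ?_ ?_
  · intro ω hω
    simpa [Finset.mem_powersetCard] using hω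
  · intro s hs
    simpa [Finset.mem_powersetCard] using hs
  · intro ω _
    ext i
    simp
  · intro s _
    ext i
    simp

lemma bernPi_half_ones_le (k : ℕ) (hk : 0 < k) {p : ℝ} (hp : p ∈ Set.Icc (0 : ℝ) 1) :
    bernPi (2 * k) p {ω | (Finset.univ.filter (fun i => ω i = true)).card = k} ≤
      ENNReal.ofReal (1 / √((2 * k : ℕ) : ℝ)) := by
  have hset : {ω : Fin (2 * k) → Bool | (Finset.univ.filter (fun i => ω i = true)).card = k} =
      ((Finset.univ.filter (fun ω : Fin (2 * k) → Bool =>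
        (Finset.univ.filter (fun i => ω i = true)).card = k) : Finset _) : Set _) := by
    ext; simp
  rw [hset, ← sum_measure_singleton]
  have hmass : ∀ ω ∈ Finset.univ.filter (fun ω : Fin (2 * k) → Bool =>
      (Finset.univ.filter (fun i => ω i = true)).card = k),
      bernPi (2 * k) p {ω} = ENNReal.ofReal (p ^ k * (1 - p) ^ k) := by
    intro ω hω
    have hω' := (Finset.mem_filter.1 hω).2
    rw [bernPi_singleton hp, hω', show 2 * k - k = k by omega]
  rw [Finset.sum_congr rfl hmass, Finset.sum_const, card_filter_card_ones_eq,
    ← Nat.centralBinom_eq_two_mul_choose, ← ENNReal.ofReal_nsmul, nsmul_eq_mul]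
  exact ENNReal.ofReal_le_ofReal (centralBinom_mul_pow_le k hk hp)

/-- For even `N`, the function equal to `N^{-1/2}` on the set of binary sequences
with exactly `N/2` ones and `1` elsewhere is a p-variable for testing randomness
in `{0,1}^N`. -/
theorem half_ones_indicator_is_p_variable
    (N : ℕ) (hN : 0 < N) (hNeven : Even N)
    (f : (Fin N → Bool) → ℝ)
    (hf : ∀ ω : Fin N → Bool,
      f ω = if (Finset.univ.filter (fun i => ω i = true)).card = N / 2
            then 1 / Real.sqrt N else 1) :
    ∀ p ∈ Set.Icc (0 : ℝ) 1, ∀ ε : ℝ, 0 < ε →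
      bernPi N p {ω : Fin N → Bool | f ω ≤ ε} ≤ ENNReal.ofReal ε := by
  intro p hp ε _
  obtain ⟨k, rfl⟩ : ∃ k, N = 2 * k := hNeven.two_dvd
  have hk : 0 < k := by omega
  have hhalf : 2 * k / 2 = k := by omega
  rcases le_or_gt 1 ε with h1 | h1
  · have := isProbabilityMeasure_bern hp
    have : IsProbabilityMeasure (bernPi (2 * k) p) := by unfold bernPi; infer_instance
    exact prob_le_one.trans (ENNReal.one_le_ofReal.2 h1)
  -- For `ε < 1`, membership in the sublevel set forces both `ω ∈ E` and `1 / √N ≤ ε`.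
  have key : ∀ ω, f ω ≤ ε → (Finset.univ.filter (fun i => ω i = true)).card = k ∧
      1 / √((2 * k : ℕ) : ℝ) ≤ ε := by
    intro ω hω
    rw [hf, hhalf] at hω
    split_ifs at hω with hc
    · exact ⟨hc, hω⟩
    · linarith
  rcases Set.eq_empty_or_nonempty {ω | f ω ≤ ε} with he | ⟨ω₀, hω₀⟩
  · simp [he]
  · exact (measure_mono (show {ω | f ω ≤ ε} ⊆ _ from fun ω hω => (key ω hω).1)).trans <|
      (bernPi_half_ones_le k hk hp).trans (ENNReal.ofReal_le_ofReal (key ω₀ hω₀).2)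
end

section
/- Let (S_n)_{n≥0} be a martingale with respect to a filtration (G_n)_{n≥0} on a probability space, with S_n > 0 almost surely for every n, and let c > 1. Define the CUSUM statistic M_n := max_{0 ≤ i ≤ n−1} S_n / S_i and the stopping time τ'_1 := min{n ≥ 1 : M_n ≥ c} (with min ∅ := ∞). Then E(τ'_1) ≥ c. -/
/-!
The proof compares the CUSUM statistic with the Shiryaev–Roberts statistic
`R n = ∑ i < n, S n / S i`. It dominates the CUSUM maximum, so `R ≥ c` at the alarm time, and
`R n - n` is a martingale, since `R (n + 1) = (S (n + 1) / S n) * (R n + 1)`.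

Stopping at the alarm, with `A n` the event that no alarm has occurred up to time `n`, gives
`∑ k < n, P (A k) ≥ ∫_{A n} R n + c * P (A n)ᶜ` for every `n` (`sum_noAlarm_ge`). All integrals
are taken in `[0, ∞]`, so no integrability of the ratios is needed; the only input from the
martingale property is `∫ S (n + 1) * h = ∫ S n * h` for nonnegative `G n`-measurable `h`
(`lintegral_succ_mul_eq`). Since `∑ k < n, 1_{A k} ≤ τ` pointwise, `T = E τ` satisfies
`c * P (A n)ᶜ ≤ T` and `n * P (A n) ≤ T`. If `T < ∞` the second bound forces `P (A n) → 0`,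
and the first one then gives `c ≤ T`.
-/

open MeasureTheory ENNReal NNReal

namespace CusumAux

variable {Ω : Type*} {m0 : MeasurableSpace Ω} {μ : Measure Ω}

/-- The event that no ratio `S n / S i` with `i < n ≤ k` reaches `c`, that is, no alarm has been
raised up to and including time `k`. -/
def noAlarm (S : ℕ → Ω → ℝ) (c : ℝ) (k : ℕ) : Set Ω :=
  {ω | ∀ n ≤ k, ∀ i < n, S n ω / S i ω < c}

/-- The sum `∑ i < n, 1 / S i` in `[0, ∞]`; the Shiryaev–Roberts statistic is `S n` times it. -/
noncomputable def invSum (S : ℕ → Ω → ℝ) (n : ℕ) (ω : Ω) : ℝ≥0∞ :=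
  ∑ i ∈ Finset.range n, (ENNReal.ofReal (S i ω))⁻¹

lemma noAlarm_antitone (S : ℕ → Ω → ℝ) (c : ℝ) : Antitone (noAlarm S c) :=
  fun _ _ hkl _ hω n hn => hω n (hn.trans hkl)

lemma measurableSet_noAlarm {G : Filtration ℕ m0} {S : ℕ → Ω → ℝ}
    (hS : Martingale S G μ) (c : ℝ) (k : ℕ) : MeasurableSet[G k] (noAlarm S c k) := by
  have hm : ∀ n ≤ k, Measurable[G k] (S n) := fun n hn =>
    ((hS.stronglyAdapted n).mono (G.mono hn)).measurable
  have : noAlarm S c k = ⋂ n, ⋂ (_ : n ≤ k), ⋂ i, ⋂ (_ : i < n), {ω | S n ω / S i ω < c} := by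
    ext ω; simp [noAlarm]
  rw [this]
  refine MeasurableSet.iInter fun n => MeasurableSet.iInter fun hn =>
    MeasurableSet.iInter fun i => MeasurableSet.iInter fun hi => ?_
  have hdiv : Measurable[G k] fun ω => S n ω / S i ω :=
    (hm n hn).div (hm i (hi.le.trans hn))
  exact hdiv measurableSet_Iio

/-- The martingale property tested against a nonnegative function, without any integrability of
the product: both sides are integrals of `h` against measures that agree on `G k`. -/
lemma lintegral_succ_mul_eq [IsProbabilityMeasure μ] {G : Filtration ℕ m0} {S : ℕ → Ω → ℝ}
    (hS : Martingale S G μ) (hS_pos : ∀ n, ∀ᵐ ω ∂μ, 0 < S n ω) (k : ℕ)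
    {h : Ω → ℝ≥0∞} (hh : Measurable[G k] h) :
    ∫⁻ ω, ENNReal.ofReal (S (k + 1) ω) * h ω ∂μ = ∫⁻ ω, ENNReal.ofReal (S k ω) * h ω ∂μ := by
  have hm : ∀ n, Measurable fun ω => ENNReal.ofReal (S n ω) := fun n =>
    (((hS.stronglyAdapted n).mono (G.le n)).measurable).ennreal_ofReal
  have hset : ∀ n s, ∫⁻ ω in s, ENNReal.ofReal (S n ω) ∂μ
      = ENNReal.ofReal (∫ ω in s, S n ω ∂μ) := fun n s =>
    (ofReal_integral_eq_lintegral_ofReal (hS.integrable n).integrableOn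
      (ae_restrict_of_ae ((hS_pos n).mono fun _ hω => hω.le))).symm
  have htrim : (μ.withDensity fun ω => ENNReal.ofReal (S (k + 1) ω)).trim (G.le k)
      = (μ.withDensity fun ω => ENNReal.ofReal (S k ω)).trim (G.le k) := by
    refine @Measure.ext _ (G k) _ _ fun s hs => ?_
    rw [trim_measurableSet_eq _ hs, trim_measurableSet_eq _ hs,
      withDensity_apply _ (G.le k s hs), withDensity_apply _ (G.le k s hs), hset, hset,
      hS.setIntegral_eq k.le_succ hs]
  have key : ∀ n, ∫⁻ ω, ENNReal.ofReal (S n ω) * h ω ∂μ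
      = ∫⁻ ω, h ω ∂((μ.withDensity fun ω => ENNReal.ofReal (S n ω)).trim (G.le k)) := by
    intro n
    rw [lintegral_trim (G.le k) hh,
      lintegral_withDensity_eq_lintegral_mul _ (hm n) (hh.mono (G.le k) le_rfl)]
    rfl
  rw [key, key, htrim]

lemma measurable_invSum {G : Filtration ℕ m0} {S : ℕ → Ω → ℝ}
    (hS : Martingale S G μ) (k : ℕ) : Measurable[G k] (invSum S (k + 1)) := by
  unfold invSum
  refine Finset.measurable_fun_sum _ fun i hi => ?_
  have hi' : i ≤ k := by simpa [Nat.lt_succ_iff] using hi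
  exact (((hS.stronglyAdapted i).mono (G.mono hi')).measurable).ennreal_ofReal.inv

/-- The one-step identity `E[R (k + 1); A k] = E[R k; A k] + P (A k)` for the Shiryaev–Roberts
statistic `R`. -/
lemma setLIntegral_step [IsProbabilityMeasure μ] {G : Filtration ℕ m0} {S : ℕ → Ω → ℝ}
    (hS : Martingale S G μ) (hS_pos : ∀ n, ∀ᵐ ω ∂μ, 0 < S n ω) (c : ℝ) (k : ℕ) :
    ∫⁻ ω in noAlarm S c k, ENNReal.ofReal (S (k + 1) ω) * invSum S (k + 1) ω ∂μ
      = ∫⁻ ω in noAlarm S c k, ENNReal.ofReal (S k ω) * invSum S k ω ∂μ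
        + μ (noAlarm S c k) := by
  have hA := measurableSet_noAlarm hS c k
  have hA0 := G.le k _ hA
  have hind : ∀ n, ∫⁻ ω in noAlarm S c k, ENNReal.ofReal (S n ω) * invSum S (k + 1) ω ∂μ
      = ∫⁻ ω, ENNReal.ofReal (S n ω) * (noAlarm S c k).indicator (invSum S (k + 1)) ω ∂μ := by
    intro n
    rw [← lintegral_indicator hA0]
    refine lintegral_congr fun ω => ?_
    by_cases hω : ω ∈ noAlarm S c k <;> simp [hω]
  rw [hind, lintegral_succ_mul_eq hS hS_pos k ((measurable_invSum hS k).indicator hA), ← hind]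
  have hae : ∀ᵐ ω ∂μ.restrict (noAlarm S c k), ENNReal.ofReal (S k ω) * invSum S (k + 1) ω
      = ENNReal.ofReal (S k ω) * invSum S k ω + 1 := by
    filter_upwards [ae_restrict_of_ae (hS_pos k)] with ω hω
    rw [invSum, Finset.sum_range_succ, mul_add,
      ENNReal.mul_inv_cancel (by simpa using hω) ENNReal.ofReal_ne_top, invSum]
  rw [lintegral_congr_ae hae, lintegral_add_right _ measurable_const]
  simp

/-- The Shiryaev–Roberts statistic is at least `c` when the first alarm is raised. -/
lemma le_of_first_alarm {S : ℕ → Ω → ℝ} {c : ℝ} {n : ℕ} {ω : Ω} (hpos : ∀ n, 0 < S n ω)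
    (h1 : ω ∈ noAlarm S c n) (h2 : ω ∉ noAlarm S c (n + 1)) :
    ENNReal.ofReal c ≤ ENNReal.ofReal (S (n + 1) ω) * invSum S (n + 1) ω := by
  simp only [noAlarm, Set.mem_ofPred_eq, not_forall, not_lt] at h1 h2
  obtain ⟨m, hm, i, hi, hc⟩ := h2
  have hmn : m = n + 1 := by
    by_contra hne
    exact absurd (h1 m (by omega) i hi) (not_lt.mpr hc)
  subst hmn
  calc ENNReal.ofReal c ≤ ENNReal.ofReal (S (n + 1) ω / S i ω) := ENNReal.ofReal_le_ofReal hc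
    _ = ENNReal.ofReal (S (n + 1) ω) * (ENNReal.ofReal (S i ω))⁻¹ := by
        rw [ENNReal.ofReal_div_of_pos (hpos i), div_eq_mul_inv]
    _ ≤ _ := by
        gcongr
        exact Finset.single_le_sum (f := fun i => (ENNReal.ofReal (S i ω))⁻¹)
          (fun _ _ => zero_le) (Finset.mem_range.mpr hi)

/-- Optional stopping for `R n - n` at the minimum of the alarm time and `n`. -/
lemma sum_noAlarm_ge [IsProbabilityMeasure μ] {G : Filtration ℕ m0} {S : ℕ → Ω → ℝ}
    (hS : Martingale S G μ) (hS_pos : ∀ n, ∀ᵐ ω ∂μ, 0 < S n ω) (c : ℝ) (n : ℕ) :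
    ∫⁻ ω in noAlarm S c n, ENNReal.ofReal (S n ω) * invSum S n ω ∂μ
        + ENNReal.ofReal c * μ (noAlarm S c n)ᶜ
      ≤ ∑ k ∈ Finset.range n, μ (noAlarm S c k) := by
  induction n with
  | zero => simp [invSum, noAlarm]
  | succ n ih =>
    have hA : ∀ k, MeasurableSet (noAlarm S c k) := fun k =>
      G.le k _ (measurableSet_noAlarm hS c k)
    have hsub := noAlarm_antitone S c n.le_succ
    have hdiff := (hA n).diff (hA (n + 1))
    have hcompl : μ (noAlarm S c (n + 1))ᶜ
        ≤ μ (noAlarm S c n)ᶜ + μ (noAlarm S c n \ noAlarm S c (n + 1)) := by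
      refine (measure_mono fun ω hω => ?_).trans (measure_union_le _ _)
      by_cases h : ω ∈ noAlarm S c n
      · exact Or.inr ⟨h, hω⟩
      · exact Or.inl h
    have hsplit : ∫⁻ ω in noAlarm S c n, ENNReal.ofReal (S (n + 1) ω) * invSum S (n + 1) ω ∂μ
        = ∫⁻ ω in noAlarm S c (n + 1), ENNReal.ofReal (S (n + 1) ω) * invSum S (n + 1) ω ∂μ
          + ∫⁻ ω in noAlarm S c n \ noAlarm S c (n + 1),
              ENNReal.ofReal (S (n + 1) ω) * invSum S (n + 1) ω ∂μ := by
      rw [← lintegral_union hdiff Set.disjoint_sdiff_right, Set.union_sdiff_cancel hsub]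
    have hlow : ENNReal.ofReal c * μ (noAlarm S c n \ noAlarm S c (n + 1))
        ≤ ∫⁻ ω in noAlarm S c n \ noAlarm S c (n + 1),
              ENNReal.ofReal (S (n + 1) ω) * invSum S (n + 1) ω ∂μ := by
      rw [← setLIntegral_const]
      refine lintegral_mono_ae ?_
      filter_upwards [ae_restrict_of_ae (ae_all_iff.mpr hS_pos), ae_restrict_mem hdiff]
        with ω hpos hω
      exact le_of_first_alarm hpos hω.1 hω.2
    rw [Finset.sum_range_succ]
    calc _ ≤ ∫⁻ ω in noAlarm S c (n + 1), ENNReal.ofReal (S (n + 1) ω) * invSum S (n + 1) ω ∂μ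
          + ENNReal.ofReal c *
            (μ (noAlarm S c n)ᶜ + μ (noAlarm S c n \ noAlarm S c (n + 1))) := by gcongr
      _ = ∫⁻ ω in noAlarm S c (n + 1), ENNReal.ofReal (S (n + 1) ω) * invSum S (n + 1) ω ∂μ
          + ENNReal.ofReal c * μ (noAlarm S c n \ noAlarm S c (n + 1))
          + ENNReal.ofReal c * μ (noAlarm S c n)ᶜ := by ring
      _ ≤ ∫⁻ ω in noAlarm S c n, ENNReal.ofReal (S (n + 1) ω) * invSum S (n + 1) ω ∂μ
          + ENNReal.ofReal c * μ (noAlarm S c n)ᶜ := by rw [hsplit]; gcongr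
      _ = ∫⁻ ω in noAlarm S c n, ENNReal.ofReal (S n ω) * invSum S n ω ∂μ
          + ENNReal.ofReal c * μ (noAlarm S c n)ᶜ + μ (noAlarm S c n) := by
        rw [setLIntegral_step hS hS_pos]; ring
      _ ≤ _ := by gcongr

/-- At most `N` of the events `noAlarm S c k` contain `ω` if an alarm is raised at time `N`. -/
lemma sum_indicator_le {S : ℕ → Ω → ℝ} {c : ℝ} {N i : ℕ} {ω : Ω} (hi : i < N)
    (h : c ≤ S N ω / S i ω) (n : ℕ) :
    ∑ k ∈ Finset.range n, (noAlarm S c k).indicator (1 : Ω → ℝ≥0∞) ω ≤ N := by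
  calc _ ≤ ∑ k ∈ Finset.range n, if k ∈ Finset.range N then (1 : ℝ≥0∞) else 0 := by
        refine Finset.sum_le_sum fun k _ => ?_
        by_cases hk : k < N
        · simp only [Finset.mem_range, hk, if_true]
          exact Set.indicator_le_self' (fun _ _ => zero_le) ω
        · have : ω ∉ noAlarm S c k := fun hω =>
            absurd (hω N (not_lt.mp hk) i hi) (not_lt.mpr h)
          simp [this]
    _ = ((min n N : ℕ) : ℝ≥0∞) := by
        have : (Finset.range n).filter (· < N) = Finset.range (min n N) := by
          ext k; simp
        simp [this]
    _ ≤ N := by exact_mod_cast min_le_right n N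

end CusumAux

open CusumAux in
/-- Validity of the CUSUM procedure: if `S` is an a.s. positive martingale,
`M_n := max_{0 ≤ i ≤ n-1} S_n / S_i`, and `τ'₁` is the first time `n ≥ 1` when
`M_n ≥ c` (with `τ'₁ = ∞` if this never happens), then `E(τ'₁) ≥ c`. -/
theorem cusum_expected_alarm_time
    {Ω : Type*} {m0 : MeasurableSpace Ω} {μ : Measure Ω} [IsProbabilityMeasure μ]
    (G : Filtration ℕ m0) (S : ℕ → Ω → ℝ)
    (hS : Martingale S G μ) (hS_pos : ∀ n, ∀ᵐ ω ∂μ, 0 < S n ω)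
    (c : ℝ) (hc : 1 < c)
    (τ : Ω → ℝ≥0∞)
    (hτ : ∀ ω, τ ω = sInf {x : ℝ≥0∞ | ∃ n : ℕ, ∃ hn : 1 ≤ n, x = n ∧
      c ≤ (Finset.range n).sup' (Finset.nonempty_range_iff.mpr
            (Nat.one_le_iff_ne_zero.mp hn)) (fun i => S n ω / S i ω)}) :
    ENNReal.ofReal c ≤ ∫⁻ ω, τ ω ∂μ := by
  have hA : ∀ k, MeasurableSet (noAlarm S c k) := fun k =>
    G.le k _ (measurableSet_noAlarm hS c k)
  have hsum : ∀ n, ∑ k ∈ Finset.range n, μ (noAlarm S c k) ≤ ∫⁻ ω, τ ω ∂μ := by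
    intro n
    calc ∑ k ∈ Finset.range n, μ (noAlarm S c k)
        = ∫⁻ ω, ∑ k ∈ Finset.range n, (noAlarm S c k).indicator (1 : Ω → ℝ≥0∞) ω ∂μ := by
          rw [lintegral_finsetSum _ fun k _ => measurable_one.indicator (hA k)]
          exact Finset.sum_congr rfl fun k _ => (lintegral_indicator_one (hA k)).symm
      _ ≤ ∫⁻ ω, τ ω ∂μ := by
          refine lintegral_mono fun ω => ?_
          rw [hτ]
          refine le_sInf ?_
          rintro x ⟨N, hN, rfl, hcN⟩
          obtain ⟨i, hi, hci⟩ := (Finset.le_sup'_iff _).mp hcN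
          exact sum_indicator_le (Finset.mem_range.mp hi) hci n
  set T := ∫⁻ ω, τ ω ∂μ with hT
  by_cases hTtop : T = ∞
  · rw [hTtop]; exact le_top
  have h1 : ∀ n, ENNReal.ofReal c * μ (noAlarm S c n)ᶜ ≤ T := fun n =>
    le_add_self.trans ((sum_noAlarm_ge hS hS_pos c n).trans (hsum n))
  have h2 : ∀ n : ℕ, n * μ (noAlarm S c n) ≤ T := fun n => by
    refine le_trans ?_ (hsum n)
    have := Finset.card_nsmul_le_sum (Finset.range n) (fun k => μ (noAlarm S c k))
      (μ (noAlarm S c n))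
      fun k hk => measure_mono (noAlarm_antitone S c (Finset.mem_range.mp hk).le)
    simpa using this
  have h3 : ∀ n : ℕ, 1 ≤ n → ENNReal.ofReal c ≤ ENNReal.ofReal c * (T / n) + T := fun n hn => by
    have hle : μ (noAlarm S c n) ≤ T / n := by
      rw [ENNReal.le_div_iff_mul_le (Or.inl (by exact_mod_cast (by omega : n ≠ 0)))
        (Or.inl (ENNReal.natCast_ne_top n)), mul_comm]
      exact h2 n
    calc ENNReal.ofReal c
        = ENNReal.ofReal c * μ (noAlarm S c n) + ENNReal.ofReal c * μ (noAlarm S c n)ᶜ := by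
          rw [← mul_add, measure_add_measure_compl (hA n), measure_univ, mul_one]
      _ ≤ _ := by gcongr; exact h1 n
  have hlim : Filter.Tendsto (fun n : ℕ => ENNReal.ofReal c * (T / n) + T) Filter.atTop
      (nhds (ENNReal.ofReal c * 0 + T)) := by
    refine Filter.Tendsto.add (ENNReal.Tendsto.const_mul ?_ (Or.inr ENNReal.ofReal_ne_top))
      tendsto_const_nhds
    have := ENNReal.Tendsto.const_mul ENNReal.tendsto_inv_nat_nhds_zero (a := T) (Or.inr hTtop)
    simpa [div_eq_mul_inv] using this
  simpa using ge_of_tendsto hlim (Filter.eventually_atTop.mpr ⟨1, h3⟩)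
end

section
/- Let (S_n)_{n≥0} be a martingale with respect to a filtration (G_n)_{n≥0} on a probability space, with S_n > 0 almost surely for every n, and let c > 1. Define the CUSUM alarm times τ'_0 := 0 and τ'_k := min{n > τ'_{k−1} : max_{τ'_{k−1} ≤ i ≤ n−1} S_n / S_i ≥ c} (min ∅ := ∞), and let A_n := max{k : τ'_k ≤ n} be the number of alarms raised by time n. Then almost surely limsup_{n→∞} A_n / n ≤ 1/c. -/
open MeasureTheory ENNReal NNReal Filter

/-!
The proof compares the CUSUM procedure with the Shiryaev–Roberts procedure. The latter runs the
statistic `V (n + 1) = (V n + 1) * S (n + 1) / S n`, started at `0` and reset to `0` whenever it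
reaches `c`; let `B n` be the number of resets up to time `n`.

* Pathwise, as long as no reset has occurred since time `i`, `V n` dominates `S n / S i`. Hence
  there is a reset between any two consecutive CUSUM alarms, and at least `k` CUSUM alarms by
  time `n` force `k ≤ B n` (`le_srCount`).
* For `θ > 0`, put `Φ n = (1 + θ c) ^ B n * (1 + θ V n)`. A reset replaces the factor
  `1 + θ u` with `u ≥ c` by `1 + θ c`, so
  `Φ (n + 1) ≤ (1 + θ c) ^ B n * (1 + θ (V n + 1) S (n + 1) / S n)`.
  By the martingale property the right-hand side has conditional expectation
  `(1 + θ c) ^ B n * (1 + θ (V n + 1)) ≤ (1 + θ) Φ n`, whence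
  `E (1 + θ c) ^ B n ≤ E Φ n ≤ (1 + θ) ^ n` (`lintegral_srPot_le`).
* If `a > 1 / c`, then `1 + θ < (1 + θ c) ^ a` for small `θ`, so
  `∑ n, E (1 + θ c) ^ (B n - a n) < ∞`, and almost surely `B n ≤ a n` eventually. Letting `a`
  decrease to `1 / c` gives the bound on the limsup.
-/

/-- State at time `n` of the Shiryaev–Roberts procedure with threshold `c` along the path `s`:
the current value of the statistic (reset to `0` at an alarm) and the number of alarms so far. -/
noncomputable def srState (c : ℝ) (s : ℕ → ℝ) : ℕ → ℝ × ℕ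
  | 0 => (0, 0)
  | n + 1 =>
    if c ≤ ((srState c s n).1 + 1) * s (n + 1) / s n then (0, (srState c s n).2 + 1)
    else (((srState c s n).1 + 1) * s (n + 1) / s n, (srState c s n).2)

lemma srState_nonneg {c : ℝ} {s : ℕ → ℝ} (hs : ∀ n, 0 < s n) (n : ℕ) :
    0 ≤ (srState c s n).1 := by
  induction n with
  | zero => simp [srState]
  | succ n ih =>
    have h1 := hs n
    have h2 := hs (n + 1)
    rw [srState]
    split_ifs
    · simp
    · positivity

lemma srState_lt {c : ℝ} (hc : 0 < c) (s : ℕ → ℝ) (n : ℕ) : (srState c s n).1 < c := by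
  cases n with
  | zero => simpa [srState] using hc
  | succ n =>
    rw [srState]
    split_ifs with h
    · simpa using hc
    · simpa using h

lemma srState_mono (c : ℝ) (s : ℕ → ℝ) : Monotone fun n => (srState c s n).2 := by
  refine monotone_nat_of_le_succ fun n => ?_
  rw [srState]
  split_ifs <;> simp

/-- Unless an alarm occurs in `(i, j + 1]`, the Shiryaev–Roberts statistic at time `j + 1`
dominates the likelihood ratio `s (j + 1) / s i`. -/
lemma srState_alarm_or_le {c : ℝ} {s : ℕ → ℝ} (hs : ∀ n, 0 < s n) {i j : ℕ} (hij : i ≤ j) :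
    (srState c s i).2 < (srState c s (j + 1)).2 ∨
      s (j + 1) / s i ≤ (srState c s (j + 1)).1 := by
  induction j, hij using Nat.le_induction with
  | base =>
    have h0 := srState_nonneg (c := c) hs i
    rw [srState]
    split_ifs
    · left; simp
    · right
      simp only
      have := hs i
      have := hs (i + 1)
      gcongr
      nlinarith
  | succ j hij ih =>
    rcases ih with ih | ih
    · exact Or.inl (ih.trans_le (srState_mono c s (Nat.le_succ _)))
    · rw [srState]
      split_ifs
      · left
        exact Nat.lt_succ_of_le (srState_mono c s (by omega : i ≤ j + 1))
      · right
        simp only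
        have h1 := hs i
        have h2 := hs (j + 1)
        have h3 := hs (j + 1 + 1)
        calc s (j + 1 + 1) / s i = s (j + 1) / s i * s (j + 1 + 1) / s (j + 1) := by
              field_simp
          _ ≤ _ := by gcongr; linarith

/-- If the `k`-th CUSUM alarm occurs by time `n`, then the Shiryaev–Roberts procedure raises at
least `k` alarms by time `n`. -/
lemma le_srCount {c : ℝ} (hc : 0 < c) {s : ℕ → ℝ} (hs : ∀ n, 0 < s n) {τ : ℕ → ℝ≥0∞}
    (hτ : ∀ k : ℕ, τ (k + 1) =
      sInf {x : ℝ≥0∞ | ∃ n t : ℕ, x = n ∧ τ k = t ∧ ∃ htn : t < n,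
        c ≤ (Finset.Ico t n).sup' (Finset.nonempty_Ico.mpr htn) (fun i => s n / s i)})
    (k : ℕ) : ∀ n : ℕ, τ k ≤ n → k ≤ (srState c s n).2 := by
  induction k with
  | zero => simp
  | succ k ih =>
    intro n hn
    rw [hτ] at hn
    have hlt : (n : ℝ≥0∞) < ((n + 1 : ℕ) : ℝ≥0∞) := by exact_mod_cast Nat.lt_succ_self n
    obtain ⟨x, ⟨n', t, rfl, ht, htn, hsup⟩, hx⟩ := sInf_lt_iff.1 (hn.trans_lt hlt)
    have hn' : n' ≤ n := Nat.lt_succ_iff.1 (by exact_mod_cast hx)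
    obtain ⟨i, hi, hci⟩ := (Finset.le_sup'_iff _).1 hsup
    rw [Finset.mem_Ico] at hi
    obtain ⟨j, rfl⟩ : ∃ j, n' = j + 1 := ⟨n' - 1, by omega⟩
    have h1 : k ≤ (srState c s t).2 := ih t ht.le
    have h2 := srState_mono c s hi.1
    have h3 := srState_mono c s hn'
    simp only at h2 h3
    rcases srState_alarm_or_le (c := c) hs (Nat.lt_succ_iff.1 hi.2) with h | h
    · omega
    · exact absurd (hci.trans h) (not_le.2 (srState_lt hc s _))

/-- The potential `(1 + θ c) ^ B n * (1 + θ V n)`, where `(V n, B n) = srState c s n`. -/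
noncomputable def srPot (c θ : ℝ) (s : ℕ → ℝ) (n : ℕ) : ℝ :=
  (1 + θ * c) ^ (srState c s n).2 * (1 + θ * (srState c s n).1)

lemma srPot_succ_le {c θ : ℝ} (hc : 0 < c) (hθ : 0 < θ) (s : ℕ → ℝ) (n : ℕ) :
    srPot c θ s (n + 1) ≤ (1 + θ * c) ^ (srState c s n).2 *
      (1 + θ * (((srState c s n).1 + 1) * s (n + 1) / s n)) := by
  rw [srPot, srState]
  split_ifs with h
  · simp only [mul_zero, add_zero, mul_one, pow_succ]
    gcongr
  · exact le_rfl

section Probability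

variable {Ω : Type*} {m0 : MeasurableSpace Ω} {μ : Measure Ω}
  {G : Filtration ℕ m0} {S : ℕ → Ω → ℝ}

/-- The martingale property tested against an arbitrary nonnegative `G n`-measurable weight;
no integrability of the product is needed. -/
lemma lintegral_mul_martingale [IsFiniteMeasure μ] (hS : Martingale S G μ)
    (hS_pos : ∀ n, ∀ᵐ ω ∂μ, 0 < S n ω)
    (n : ℕ) {F : Ω → ℝ≥0∞} (hF : Measurable[G n] F) :
    ∫⁻ ω, F ω * ENNReal.ofReal (S (n + 1) ω) ∂μ = ∫⁻ ω, F ω * ENNReal.ofReal (S n ω) ∂μ := by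
  have hm : ∀ k, Measurable fun ω => ENNReal.ofReal (S k ω) := fun k =>
    ((hS.stronglyMeasurable k).measurable.mono (G.le k) le_rfl).ennreal_ofReal
  revert F
  refine @Measurable.ennreal_induction Ω (G n) _ ?_ ?_ ?_
  · intro a s hs
    have hs' := G.le n s hs
    have key : ∀ k, ∫⁻ ω, s.indicator (fun _ => a) ω * ENNReal.ofReal (S k ω) ∂μ
        = a * ENNReal.ofReal (∫ ω in s, S k ω ∂μ) := by
      intro k
      rw [ofReal_integral_eq_lintegral_ofReal (hS.integrable k).integrableOn
        (ae_restrict_of_ae ((hS_pos k).mono fun ω h => h.le)),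
        ← lintegral_const_mul _ (hm k), ← lintegral_indicator hs']
      refine lintegral_congr fun ω => ?_
      by_cases h : ω ∈ s <;> simp [h]
    rw [key, key, hS.setIntegral_eq (Nat.le_succ n) hs]
  · intro f g _ hf hg ihf ihg
    simp only [Pi.add_apply, add_mul]
    have hfm : ∀ k, Measurable fun ω => f ω * ENNReal.ofReal (S k ω) := fun k =>
      (hf.mono (G.le n) le_rfl).mul (hm k)
    rw [lintegral_add_left (hfm _), lintegral_add_left (hfm _), ihf, ihg]
  · intro f hf hmono ih
    have key : ∀ k, ∫⁻ ω, (⨆ j, f j ω) * ENNReal.ofReal (S k ω) ∂μ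
        = ⨆ j, ∫⁻ ω, f j ω * ENNReal.ofReal (S k ω) ∂μ := by
      intro k
      simp only [ENNReal.iSup_mul]
      refine lintegral_iSup (fun j => ((hf j).mono (G.le n) le_rfl).mul (hm k)) ?_
      intro i j hij ω
      exact mul_le_mul_left (hmono hij ω) _
    simp only [key, ih]

lemma measurable_srState (hS : Martingale S G μ) (c : ℝ) (n : ℕ) :
    Measurable[G n] fun ω => srState c (fun k => S k ω) n := by
  induction n with
  | zero => simp only [srState]; exact measurable_const
  | succ n ih =>
    have ih' := ih.mono (G.mono (Nat.le_succ n)) le_rfl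
    have h1 := (hS.stronglyMeasurable (n + 1)).measurable
    have h0 := (hS.stronglyMeasurable n).measurable.mono (G.mono (Nat.le_succ n)) le_rfl
    have hu : Measurable[G (n + 1)] fun ω =>
        ((srState c (fun k => S k ω) n).1 + 1) * S (n + 1) ω / S n ω :=
      ((ih'.fst.add_const 1).mul h1).div h0
    have hB : Measurable[G (n + 1)] fun ω => (srState c (fun k => S k ω) n).2 + 1 :=
      ih'.snd.add_const 1
    simp only [srState]
    exact Measurable.ite (measurableSet_le measurable_const hu) (measurable_const.prodMk hB)
      (hu.prodMk ih'.snd)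

lemma lintegral_srPot_le [IsProbabilityMeasure μ] (hS : Martingale S G μ)
    (hS_pos : ∀ n, ∀ᵐ ω ∂μ, 0 < S n ω)
    {c θ : ℝ} (hc : 0 < c) (hθ : 0 < θ) (n : ℕ) :
    ∫⁻ ω, ENNReal.ofReal (srPot c θ (fun k => S k ω) n) ∂μ ≤ ENNReal.ofReal (1 + θ) ^ n := by
  have hpos : ∀ᵐ ω ∂μ, ∀ n, 0 < S n ω := ae_all_iff.2 hS_pos
  induction n with
  | zero => simp [srPot, srState]
  | succ n ih =>
    have hst := measurable_srState hS c n
    have hSn := (hS.stronglyMeasurable n).measurable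
    -- The part of the upper bound for `srPot` at time `n + 1` that does not involve `S (n + 1)`,
    -- and the coefficient of `S (n + 1)`.
    let P : Ω → ℝ := fun ω => (1 + θ * c) ^ (srState c (fun k => S k ω) n).2
    let Q : Ω → ℝ := fun ω => P ω * θ * ((srState c (fun k => S k ω) n).1 + 1) / S n ω
    have hP : Measurable[G n] P :=
      (measurable_from_nat (f := fun k => (1 + θ * c) ^ k)).comp hst.snd
    have hQ : Measurable[G n] Q := ((hP.mul_const θ).mul (hst.fst.add_const 1)).div hSn
    have hP' : Measurable fun ω => ENNReal.ofReal (P ω) :=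
      (hP.mono (G.le n) le_rfl).ennreal_ofReal
    calc ∫⁻ ω, ENNReal.ofReal (srPot c θ (fun k => S k ω) (n + 1)) ∂μ
        ≤ ∫⁻ ω, (ENNReal.ofReal (P ω) +
            ENNReal.ofReal (Q ω) * ENNReal.ofReal (S (n + 1) ω)) ∂μ := by
          refine lintegral_mono_ae ?_
          filter_upwards [hpos] with ω hω
          have hV := srState_nonneg (c := c) hω n
          have h0 := hω n
          have h1 := hω (n + 1)
          have hP0 : 0 ≤ P ω := by positivity
          have hQ0 : 0 ≤ Q ω := by positivity
          rw [← ENNReal.ofReal_mul hQ0, ← ENNReal.ofReal_add hP0 (by positivity)]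
          refine ENNReal.ofReal_le_ofReal ((srPot_succ_le hc hθ _ n).trans_eq ?_)
          simp only [P, Q]
          ring
      _ = ∫⁻ ω, (ENNReal.ofReal (P ω) + ENNReal.ofReal (Q ω) * ENNReal.ofReal (S n ω)) ∂μ := by
          rw [lintegral_add_left hP', lintegral_add_left hP',
            lintegral_mul_martingale hS hS_pos n hQ.ennreal_ofReal]
      _ ≤ ∫⁻ ω, ENNReal.ofReal (1 + θ) *
            ENNReal.ofReal (srPot c θ (fun k => S k ω) n) ∂μ := by
          refine lintegral_mono_ae ?_
          filter_upwards [hpos] with ω hω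
          have hV := srState_nonneg (c := c) hω n
          have h0 := hω n
          have hP0 : 0 ≤ P ω := by positivity
          have hQ0 : 0 ≤ Q ω := by positivity
          rw [← ENNReal.ofReal_mul hQ0, ← ENNReal.ofReal_add hP0 (by positivity),
            ← ENNReal.ofReal_mul (by positivity)]
          refine ENNReal.ofReal_le_ofReal ?_
          have hQS : Q ω * S n ω = P ω * θ * ((srState c (fun k => S k ω) n).1 + 1) :=
            div_mul_cancel₀ _ h0.ne'
          have hpot : srPot c θ (fun k => S k ω) n
              = P ω * (1 + θ * (srState c (fun k => S k ω) n).1) := rfl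
          rw [hQS, hpot]
          have : 0 ≤ P ω * (θ * θ * (srState c (fun k => S k ω) n).1) := by positivity
          nlinarith
      _ = ENNReal.ofReal (1 + θ) *
            ∫⁻ ω, ENNReal.ofReal (srPot c θ (fun k => S k ω) n) ∂μ :=
          lintegral_const_mul' _ _ ENNReal.ofReal_ne_top
      _ ≤ ENNReal.ofReal (1 + θ) ^ (n + 1) := by
          rw [pow_succ']
          gcongr

/-- Almost surely, the Shiryaev–Roberts procedure eventually raises at most `a n` alarms by
time `n`, for every rate `a > 1 / c`. -/
lemma eventually_srCount_le [IsProbabilityMeasure μ] (hS : Martingale S G μ)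
    (hS_pos : ∀ n, ∀ᵐ ω ∂μ, 0 < S n ω)
    {c a : ℝ} (hc : 0 < c) (ha : 1 / c < a) :
    ∀ᵐ ω ∂μ, ∀ᶠ n : ℕ in atTop, ((srState c (fun k => S k ω) n).2 : ℝ) ≤ a * n := by
  have hpos : ∀ᵐ ω ∂μ, ∀ n, 0 < S n ω := ae_all_iff.2 hS_pos
  have hac : 1 < a * c := (div_lt_iff₀ hc).1 ha
  have ha0 : 0 < a := (by positivity : 0 < 1 / c).trans ha
  -- With this choice `1 + θ c = (1 + a c) / 2 < a c`.
  obtain ⟨θ, hθ, hθc⟩ : ∃ θ : ℝ, 0 < θ ∧ 1 + θ * c < a * c :=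
    ⟨(a * c - 1) / (2 * c), by apply div_pos <;> linarith, by field_simp; linarith⟩
  have hq0 : 0 < 1 + θ * c := by positivity
  have hq1 : 1 < 1 + θ * c := by linarith [mul_pos hθ hc]
  set q := 1 + θ * c with hq
  have hlt : 1 + θ < q ^ a := by
    rw [← Real.log_lt_log_iff (by positivity) (by positivity), Real.log_rpow hq0]
    have h1 : Real.log (1 + θ) ≤ θ := by
      linarith [Real.log_le_sub_one_of_pos (by positivity : 0 < 1 + θ)]
    have h2 : 1 - q⁻¹ ≤ Real.log q := Real.one_sub_inv_le_log_of_pos hq0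
    have h3 : θ < a * (1 - q⁻¹) := by
      have : a * (1 - q⁻¹) = θ * (a * c) / q := by
        field_simp
        rw [hq]
        ring
      rw [this, lt_div_iff₀ hq0]
      gcongr
    linarith [mul_le_mul_of_nonneg_left h2 ha0.le]
  set Q := q ^ a with hQ
  have hQ0 : 0 < Q := by positivity
  let f : ℕ → Ω → ℝ≥0∞ := fun n ω =>
    ENNReal.ofReal (q ^ (srState c (fun k => S k ω) n).2 / Q ^ n)
  have hf : ∀ n, Measurable (f n) := fun n =>
    ((measurable_from_nat (f := fun k => ENNReal.ofReal (q ^ k / Q ^ n))).comp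
      (measurable_srState hS c n).snd).mono (G.le n) le_rfl
  have hint : ∀ n, ∫⁻ ω, f n ω ∂μ ≤ ENNReal.ofReal ((1 + θ) / Q) ^ n := by
    intro n
    calc ∫⁻ ω, f n ω ∂μ
        ≤ ∫⁻ ω, ENNReal.ofReal (1 / Q ^ n) *
            ENNReal.ofReal (srPot c θ (fun k => S k ω) n) ∂μ := by
          refine lintegral_mono_ae ?_
          filter_upwards [hpos] with ω hω
          have hV := srState_nonneg (c := c) hω n
          rw [← ENNReal.ofReal_mul (by positivity)]
          refine ENNReal.ofReal_le_ofReal ?_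
          rw [srPot, ← hq, one_div, div_eq_inv_mul]
          gcongr
          exact le_mul_of_one_le_right (by positivity) (by linarith [mul_nonneg hθ.le hV])
      _ = ENNReal.ofReal (1 / Q ^ n) *
            ∫⁻ ω, ENNReal.ofReal (srPot c θ (fun k => S k ω) n) ∂μ :=
          lintegral_const_mul' _ _ ENNReal.ofReal_ne_top
      _ ≤ ENNReal.ofReal (1 / Q ^ n) * ENNReal.ofReal (1 + θ) ^ n := by
          gcongr
          exact lintegral_srPot_le hS hS_pos hc hθ n
      _ = ENNReal.ofReal ((1 + θ) / Q) ^ n := by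
          rw [← ENNReal.ofReal_pow (by positivity), ← ENNReal.ofReal_pow (by positivity),
            ← ENNReal.ofReal_mul (by positivity), div_pow]
          congr 1
          ring
  have hr : ENNReal.ofReal ((1 + θ) / Q) < 1 := by
    rw [← ENNReal.ofReal_one, ENNReal.ofReal_lt_ofReal_iff one_pos]
    exact (div_lt_one hQ0).2 hlt
  have hsum : ∫⁻ ω, ∑' n, f n ω ∂μ ≠ ⊤ := by
    rw [lintegral_tsum fun n => (hf n).aemeasurable]
    refine ne_top_of_le_ne_top ?_ (ENNReal.tsum_le_tsum hint)
    rw [ENNReal.tsum_geometric]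
    exact ENNReal.inv_ne_top.2 (tsub_pos_of_lt hr).ne'
  filter_upwards [ae_lt_top (Measurable.tsum hf) hsum] with ω hω
  filter_upwards [(ENNReal.tendsto_atTop_zero_of_tsum_ne_top hω.ne).eventually_lt_const
    one_pos] with n hn
  have h1 : q ^ (srState c (fun k => S k ω) n).2 / Q ^ n < 1 := by
    simpa [f] using hn
  rw [div_lt_one (by positivity), hQ, ← Real.rpow_natCast, ← Real.rpow_natCast,
    ← Real.rpow_mul hq0.le, Real.rpow_lt_rpow_left_iff hq1] at h1
  exact h1.le

end Probability

/-- Frequency of false alarms of the CUSUM procedure: if `S` is an a.s. positive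
martingale and alarms are raised by the CUSUM procedure with threshold `c > 1`
(restarted after each alarm), then almost surely the number `A_n` of alarms raised
by time `n` satisfies `limsup A_n / n ≤ 1/c`. -/
theorem cusum_alarm_frequency
    {Ω : Type*} {m0 : MeasurableSpace Ω} {μ : Measure Ω} [IsProbabilityMeasure μ]
    (G : Filtration ℕ m0) (S : ℕ → Ω → ℝ)
    (hS : Martingale S G μ) (hS_pos : ∀ n, ∀ᵐ ω ∂μ, 0 < S n ω)
    (c : ℝ) (hc : 1 < c)
    (τ : ℕ → Ω → ℝ≥0∞)
    (hτ0 : ∀ ω, τ 0 ω = 0)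
    (hτ : ∀ (k : ℕ) (ω : Ω), τ (k + 1) ω =
      sInf {x : ℝ≥0∞ | ∃ n t : ℕ, x = n ∧ τ k ω = t ∧ ∃ htn : t < n,
        c ≤ (Finset.Ico t n).sup' (Finset.nonempty_Ico.mpr htn)
              (fun i => S n ω / S i ω)})
    (A : ℕ → Ω → ℝ≥0∞)
    (hA : ∀ (n : ℕ) (ω : Ω), A n ω =
      sSup {x : ℝ≥0∞ | ∃ k : ℕ, x = k ∧ τ k ω ≤ n}) :
    ∀ᵐ ω ∂μ, Filter.limsup (fun n : ℕ => A n ω / n) Filter.atTop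
      ≤ ENNReal.ofReal (1 / c) := by
  have hc0 : 0 < c := one_pos.trans hc
  have hrate : ∀ᵐ ω ∂μ, ∀ j : ℕ, ∀ᶠ n : ℕ in atTop,
      ((srState c (fun k => S k ω) n).2 : ℝ) ≤ (1 / c + 1 / ((j : ℝ) + 1)) * n :=
    ae_all_iff.2 fun j => eventually_srCount_le hS hS_pos hc0
      (lt_add_of_pos_right _ (by positivity))
  filter_upwards [ae_all_iff.2 hS_pos, hrate] with ω hω hrω
  have hAB : ∀ n : ℕ, A n ω ≤ ((srState c (fun k => S k ω) n).2 : ℝ≥0∞) := by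
    intro n
    rw [hA]
    refine sSup_le ?_
    rintro x ⟨k, rfl, hk⟩
    exact_mod_cast le_srCount hc0 hω (τ := fun k => τ k ω) (fun k => hτ k ω) k n hk
  have hlim : Tendsto (fun j : ℕ => ENNReal.ofReal (1 / c + 1 / ((j : ℝ) + 1))) atTop
      (nhds (ENNReal.ofReal (1 / c))) := by
    refine ENNReal.tendsto_ofReal ?_
    simpa using tendsto_one_div_add_atTop_nhds_zero_nat.const_add (1 / c)
  refine ge_of_tendsto' hlim fun j => ?_
  refine limsup_le_of_le (by isBoundedDefault) ?_
  filter_upwards [hrω j, eventually_gt_atTop 0] with n hn hn0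
  refine ENNReal.div_le_of_le_mul ((hAB n).trans ?_)
  rw [← ENNReal.ofReal_natCast, ← ENNReal.ofReal_natCast n,
    ← ENNReal.ofReal_mul (by positivity)]
  exact ENNReal.ofReal_le_ofReal hn
end

section
/- Let N = 2, Ω := {0,1}^2, and E := {(0,1)}. Then the upper exchangeability probability satisfies UEP(E) = 1/2 and the upper IID probability satisfies UiidP(E) = sup_{p∈[0,1]} p(1−p) = 1/4, so that UEP(E) = √2 · √N · UiidP(E). Consequently, the constant 1.5 in the inequality UEP(E) ≤ 1.5√N · UiidP(E) cannot be improved below √2. -/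
/-!
An exchangeable law gives `(0,1)` and `(1,0)` equal mass (`exchangeable_mixed_eq`), and these
outcomes are disjoint, so that mass is at most `1/2`; the uniform law on the two
(`mixedUniform`) attains the bound, whence `uep_two`. On the IID side `(0,1)` has mass
`p * (1 - p)`, which is maximal at `p = 1/2` with value `1/4` (`uiidP_two`). The remaining
claims are the arithmetic `1/2 = √2 * √2 * (1/4)`.
-/

open MeasureTheory ENNReal NNReal

/-- The upper IID probability of `E ⊆ {0,1}^N`. -/
noncomputable def UiidP (N : ℕ) (E : Set (Fin N → Bool)) : ℝ≥0∞ :=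
  ⨆ p ∈ Set.Icc (0 : ℝ) 1, bernPi N p E

/-- The upper exchangeability probability of `E ⊆ {0,1}^N`. -/
noncomputable def UEP (N : ℕ) (E : Set (Fin N → Bool)) : ℝ≥0∞ :=
  ⨆ (P : Measure (Fin N → Bool)) (_ : IsProbabilityMeasure P) (_ : Exchangeable P),
    P E

/-- Swapping the two coordinates shows that an exchangeable law gives both mixed outcomes
the same mass. -/
lemma exchangeable_mixed_eq {P : Measure (Fin 2 → Bool)} (h : Exchangeable P) :
    P {![true, false]} = P {![false, true]} := by
  have hs : Measure.map (fun x => x ∘ Equiv.swap 0 1) P {![false, true]} = P {![false, true]} := by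
    rw [h (Equiv.swap 0 1)]
  rw [Measure.map_apply (measurable_of_finite _) (Set.toFinite _).measurableSet] at hs
  rw [← hs]
  congr 1
  ext x
  simp only [Set.mem_preimage, Set.mem_singleton_iff]
  revert x
  decide

/-- The uniform law on the two outcomes containing exactly one `1`. -/
noncomputable def mixedUniform : Measure (Fin 2 → Bool) :=
  (2⁻¹ : ℝ≥0∞) • Measure.dirac ![false, true] + (2⁻¹ : ℝ≥0∞) • Measure.dirac ![true, false]

instance : IsProbabilityMeasure mixedUniform :=
  ⟨by simp [mixedUniform, ENNReal.inv_two_add_inv_two]⟩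

lemma exchangeable_mixedUniform : Exchangeable mixedUniform := by
  intro π
  have hm : Measurable fun x : Fin 2 → Bool => x ∘ π := measurable_of_finite _
  have hπ : ∀ π : Equiv.Perm (Fin 2),
      ((![false, true] : Fin 2 → Bool) ∘ π = ![false, true] ∧
        (![true, false] : Fin 2 → Bool) ∘ π = ![true, false]) ∨
      ((![false, true] : Fin 2 → Bool) ∘ π = ![true, false] ∧
        (![true, false] : Fin 2 → Bool) ∘ π = ![false, true]) := by
    decide
  rw [mixedUniform, Measure.map_add _ _ hm, Measure.map_smul, Measure.map_smul,
    Measure.map_dirac' hm, Measure.map_dirac' hm]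
  rcases hπ π with ⟨h₁, h₂⟩ | ⟨h₁, h₂⟩
  · rw [h₁, h₂]
  · rw [h₁, h₂, add_comm]

lemma uep_two : UEP 2 ({![false, true]} : Set (Fin 2 → Bool)) = 1 / 2 := by
  have hne : (![true, false] : Fin 2 → Bool) ≠ ![false, true] := by decide
  apply le_antisymm
  · refine iSup_le fun P => iSup_le fun hP => iSup_le fun hex => ?_
    have hd : Disjoint ({![true, false]} : Set (Fin 2 → Bool)) {![false, true]} := by
      simp
    have hle : P ({![true, false]} ∪ {![false, true]}) ≤ 1 := prob_le_one
    rw [measure_union hd (Set.toFinite _).measurableSet, exchangeable_mixed_eq hex,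
      ← mul_two] at hle
    rwa [ENNReal.le_div_iff_mul_le (by simp) (by simp)]
  · refine le_iSup_of_le mixedUniform (le_iSup_of_le inferInstance
      (le_iSup_of_le exchangeable_mixedUniform ?_))
    simp [mixedUniform, hne]

lemma bernPi_two {p : ℝ} (hp : p ∈ Set.Icc (0 : ℝ) 1) :
    bernPi 2 p ({![false, true]} : Set (Fin 2 → Bool)) = ENNReal.ofReal (p * (1 - p)) := by
  have : IsFiniteMeasure (bern p) := ⟨by
    simp [bern, ENNReal.add_lt_top]⟩
  rw [bernPi, Measure.pi_singleton, Fin.prod_univ_two, ENNReal.ofReal_mul hp.1]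
  simp [bern, mul_comm]

lemma uiidP_two_eq_iSup : UiidP 2 ({![false, true]} : Set (Fin 2 → Bool))
    = ⨆ p ∈ Set.Icc (0 : ℝ) 1, ENNReal.ofReal (p * (1 - p)) :=
  iSup_congr fun _ => iSup_congr fun hp => bernPi_two hp

lemma uiidP_two : UiidP 2 ({![false, true]} : Set (Fin 2 → Bool)) = 1 / 4 := by
  have hq : ENNReal.ofReal (1 / 4) = 1 / 4 := by
    rw [ENNReal.ofReal_div_of_pos (by norm_num)]; simp
  rw [uiidP_two_eq_iSup, ← hq]
  apply le_antisymm
  · exact iSup₂_le fun p _ => ENNReal.ofReal_le_ofReal (by nlinarith [sq_nonneg (p - 1 / 2)])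
  · refine le_iSup₂_of_le (1 / 2 : ℝ) (by norm_num) (ENNReal.ofReal_le_ofReal (by norm_num))

/-- For `N = 2` and `E = {(0,1)}`: `UEP(E) = 1/2`,
`UiidP(E) = sup_{p∈[0,1]} p(1-p) = 1/4`, hence `UEP(E) = √2 ⬝ √N ⬝ UiidP(E)`, so the
constant `1.5` in `UEP(E) ≤ 1.5 √N UiidP(E)` cannot be improved below `√2`. -/
theorem uep_eq_sqrt_two_mul_sqrt_N_mul_uiidP :
    UEP 2 ({![false, true]} : Set (Fin 2 → Bool)) = 1 / 2
    ∧ UiidP 2 ({![false, true]} : Set (Fin 2 → Bool))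
        = ⨆ p ∈ Set.Icc (0 : ℝ) 1, ENNReal.ofReal (p * (1 - p))
    ∧ UiidP 2 ({![false, true]} : Set (Fin 2 → Bool)) = 1 / 4
    ∧ UEP 2 ({![false, true]} : Set (Fin 2 → Bool))
        = ENNReal.ofReal (Real.sqrt 2 * Real.sqrt 2)
            * UiidP 2 ({![false, true]} : Set (Fin 2 → Bool))
    ∧ ∀ c : ℝ, 0 ≤ c →
        UEP 2 ({![false, true]} : Set (Fin 2 → Bool))
          ≤ ENNReal.ofReal (c * Real.sqrt 2)
              * UiidP 2 ({![false, true]} : Set (Fin 2 → Bool)) →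
        Real.sqrt 2 ≤ c := by
  have h2 : (1 / 2 : ℝ≥0∞) = ENNReal.ofReal (1 / 2) := by
    rw [ENNReal.ofReal_div_of_pos (by norm_num)]; simp
  have h4 : (1 / 4 : ℝ≥0∞) = ENNReal.ofReal (1 / 4) := by
    rw [ENNReal.ofReal_div_of_pos (by norm_num)]; simp
  have hs : Real.sqrt 2 * Real.sqrt 2 = 2 := Real.mul_self_sqrt (by norm_num)
  refine ⟨uep_two, uiidP_two_eq_iSup, uiidP_two, ?_, fun c hc h => ?_⟩
  · rw [uep_two, uiidP_two, h2, h4, hs, ← ENNReal.ofReal_mul (by norm_num)]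
    norm_num
  · rw [uep_two, uiidP_two, h2, h4, ← ENNReal.ofReal_mul (by positivity),
      ENNReal.ofReal_le_ofReal_iff (by positivity)] at h
    -- `h` says `2 ≤ c * √2`; cancel one factor `√2` from `√2 * √2 ≤ c * √2`.
    exact le_of_mul_le_mul_right (by linarith) (Real.sqrt_pos.2 (by norm_num : (0 : ℝ) < 2))
end

section
/- For every p ∈ (0, e^{−1}), the infimum over κ ∈ (0,1) of p^{1−κ}/κ equals −e · p · ln p, and it is attained at κ = −1/ln p ∈ (0,1). -/
/-!
With `L = log p < -1` one has `p ^ (1 - κ) = p * exp t` for `t = -κ L > 0`. The tangent line of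
`exp` at `1` gives `exp t ≥ e t`, with equality at `t = 1`, that is at `κ = -1 / L`. Dividing
`p * exp t ≥ e p t = -e p κ L` by `κ` yields the lower bound, and the equality case shows that it
is attained, hence that it is the infimum.
-/

/-- For `p ∈ (0, e⁻¹)`, the infimum over `κ ∈ (0,1)` of `p^{1-κ}/κ` equals
`-e p ln p` and is attained at `κ = -1/ln p ∈ (0,1)`. -/
theorem inf_calibrator_eq_vovk_sellke
    (p : ℝ) (hp : p ∈ Set.Ioo (0 : ℝ) (Real.exp 1)⁻¹) :
    (-1 / Real.log p) ∈ Set.Ioo (0 : ℝ) 1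
    ∧ p ^ ((1 : ℝ) - (-1 / Real.log p)) / (-1 / Real.log p)
        = -(Real.exp 1 * p * Real.log p)
    ∧ (∀ κ ∈ Set.Ioo (0 : ℝ) 1,
        -(Real.exp 1 * p * Real.log p) ≤ p ^ ((1 : ℝ) - κ) / κ)
    ∧ sInf {x : ℝ | ∃ κ ∈ Set.Ioo (0 : ℝ) 1, x = p ^ ((1 : ℝ) - κ) / κ}
        = -(Real.exp 1 * p * Real.log p) := by
  obtain ⟨hp0, hp1⟩ := hp
  have hL : Real.log p < -1 := by
    have h := Real.log_lt_log hp0 hp1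
    rwa [Real.log_inv, Real.log_exp] at h
  have hL0 : Real.log p ≠ 0 := by linarith
  have hrpow : ∀ κ : ℝ, p ^ ((1 : ℝ) - κ) = p * Real.exp (-κ * Real.log p) := by
    intro κ
    rw [Real.rpow_def_of_pos hp0, mul_sub, mul_one, sub_eq_add_neg, Real.exp_add,
      Real.exp_log hp0]
    ring_nf
  have hmem : (-1 / Real.log p) ∈ Set.Ioo (0 : ℝ) 1 := by
    refine ⟨div_pos_of_neg_of_neg (by norm_num) (by linarith), ?_⟩
    rw [div_lt_one_of_neg (by linarith)]
    exact hL
  have hval : p ^ ((1 : ℝ) - (-1 / Real.log p)) / (-1 / Real.log p)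
      = -(Real.exp 1 * p * Real.log p) := by
    have h1 : -(-1 / Real.log p) * Real.log p = 1 := by field_simp
    rw [hrpow, h1]
    field_simp
  have hbound : ∀ κ ∈ Set.Ioo (0 : ℝ) 1,
      -(Real.exp 1 * p * Real.log p) ≤ p ^ ((1 : ℝ) - κ) / κ := by
    rintro κ ⟨hκ, -⟩
    have h := mul_le_mul_of_nonneg_left (Real.exp_one_mul_le_exp (x := -κ * Real.log p)) hp0.le
    rw [hrpow, le_div_iff₀ hκ]
    linarith
  refine ⟨hmem, hval, hbound, IsLeast.csInf_eq ⟨⟨_, hmem, hval.symm⟩, ?_⟩⟩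
  rintro x ⟨κ, hκ, rfl⟩
  exact hbound κ hκ
end
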